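/- Let X = Π_{j∈[n]} X_j with each X_j = {0,1} binary, let C = {g, n} be a binary consequence space, and let f_M : X → PMF(C) be a mechanism satisfying ε-differential privacy (finite ε ≥ 0). Suppose f_M is minimally responsive: for every agent j there exist a, b ∈ X_j and c ∈ C such that for all environments x₋ⱼ, P(f_M(a, x₋ⱼ) = c) ≠ P(f_M(b, x₋ⱼ) = c). Then for every input x ∈ X and every c ∈ C, 0 < P(f_M(x) = c) < 1; i.e., the mechanism never classifies any consequence with absolute certainty. -/

import Mathlib

open scoped ENNReal

/-- Two inputs of a product space are neighboring if they differ in exactly one coordinate. -/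
def Neighboring {n : ℕ} {X : Fin n → Type*} (x x' : ∀ j, X j) : Prop :=
  ∃ j : Fin n, x j ≠ x' j ∧ ∀ i : Fin n, i ≠ j → x i = x' i

/-- `M` satisfies `(ε,δ)`-differential privacy. -/
def IsDP {n : ℕ} {X : Fin n → Type*} {O : Type*}
    (M : (∀ j, X j) → PMF O) (ε δ : ℝ) : Prop :=
  ∀ x x' : ∀ j, X j, Neighboring x x' → ∀ S : Set O,
    (M x).toOuterMeasure S ≤
      ENNReal.ofReal (Real.exp ε) * (M x').toOuterMeasure S + ENNReal.ofReal δ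

/-!
Pure differential privacy forces the output laws at neighboring inputs to have the same support,
and any two inputs are joined by a chain of neighbors, so all output laws share one support. Whether
an event has probability `0`, or `1`, depends only on that support: an event which is impossible or
certain at one input has constant probability.
-/

section Neighboring

variable {n : ℕ} {X : Fin n → Type*} {x x' : ∀ j, X j}

theorem Neighboring.symm (h : Neighboring x x') : Neighboring x' x :=
  let ⟨j, hj, heq⟩ := h
  ⟨j, hj.symm, fun i hi => (heq i hi).symm⟩

theorem neighboring_update {j : Fin n} {a : X j} (ha : a ≠ x j) :
    Neighboring (Function.update x j a) x :=
  ⟨j, by rwa [Function.update_self], fun _ hi => Function.update_of_ne hi a x⟩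

end Neighboring

namespace IsDP

variable {n : ℕ} {X : Fin n → Type*} {O : Type*} {M : (∀ j, X j) → PMF O} {ε : ℝ}

theorem support_subset_of_neighboring (hM : IsDP M ε 0) {x x' : ∀ j, X j}
    (h : Neighboring x x') : (M x).support ⊆ (M x').support := by
  intro o ho ho'
  have hle : M x o ≤ ENNReal.ofReal (Real.exp ε) * M x' o := by
    simpa only [PMF.toOuterMeasure_apply_singleton, ENNReal.ofReal_zero, add_zero]
      using hM x x' h {o}
  rw [ho', mul_zero] at hle
  exact ho (nonpos_iff_eq_zero.mp hle)

theorem support_update (hM : IsDP M ε 0) (x : ∀ j, X j) (j : Fin n) (a : X j) :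
    (M (Function.update x j a)).support = (M x).support := by
  obtain rfl | ha := eq_or_ne a (x j)
  · rw [Function.update_eq_self]
  · have hnbr := neighboring_update ha
    exact (hM.support_subset_of_neighboring hnbr).antisymm
      (hM.support_subset_of_neighboring hnbr.symm)

theorem support_eq (hM : IsDP M ε 0) (x y : ∀ j, X j) : (M x).support = (M y).support := by
  have hybrid (s : Finset (Fin n)) : (M (s.piecewise x y)).support = (M y).support := by
    induction s using Finset.induction_on with
    | empty => rw [Finset.piecewise_empty]
    | insert j s _ ih => rw [Finset.piecewise_insert, hM.support_update, ih]
  simpa only [Finset.piecewise_univ] using hybrid Finset.univ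

end IsDP

theorem pmf_bool_ext {p q : PMF Bool} (c : Bool) (h : p c = q c) : p = q := by
  have add_apply_not (r : PMF Bool) : r c + r (!c) = 1 := by
    rw [← r.tsum_coe, tsum_fintype, Fintype.sum_bool]
    cases c
    exacts [add_comm _ _, rfl]
  have h_not : p (!c) = q (!c) := by
    refine (ENNReal.add_right_inj (p.apply_ne_top c)).mp ?_
    rw [add_apply_not p, h, add_apply_not q]
  refine PMF.ext fun d => ?_
  obtain rfl | rfl := Bool.eq_or_eq_not d c
  exacts [h, h_not]

theorem stmt13_general {n : ℕ} {X : Fin n → Type*} {O : Type*} {M : (∀ j, X j) → PMF O} {ε : ℝ}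
    (hM : IsDP M ε 0) {S : Set O} {y z : ∀ j, X j}
    (hS : (M y).toOuterMeasure S ≠ (M z).toOuterMeasure S) (x : ∀ j, X j) :
    0 < (M x).toOuterMeasure S ∧ (M x).toOuterMeasure S < 1 := by
  have zero_of_zero (h : (M x).toOuterMeasure S = 0) (w) : (M w).toOuterMeasure S = 0 := by
    rwa [PMF.toOuterMeasure_apply_eq_zero_iff, hM.support_eq w x,
      ← PMF.toOuterMeasure_apply_eq_zero_iff]
  have one_of_one (h : (M x).toOuterMeasure S = 1) (w) : (M w).toOuterMeasure S = 1 := by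
    rwa [PMF.toOuterMeasure_apply_eq_one_iff, hM.support_eq w x,
      ← PMF.toOuterMeasure_apply_eq_one_iff]
  have le_one : (M x).toOuterMeasure S ≤ 1 :=
    ((M x).toOuterMeasure.mono S.subset_univ).trans_eq
      ((PMF.toOuterMeasure_apply_eq_one_iff _ _).mpr (Set.subset_univ _))
  constructor
  · exact pos_iff_ne_zero.mpr fun h => hS ((zero_of_zero h y).trans (zero_of_zero h z).symm)
  · exact le_one.lt_of_ne fun h => hS ((one_of_one h y).trans (one_of_one h z).symm)

/-- an `ε`-differentially private mechanism `fM` on binary response spaces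
with a binary consequence space (`Bool`, `true` = grief `g`, `false` = no-grief `n`) that
is minimally responsive (for every agent `j` there are reports `a, b` and a consequence
`c` whose probability differs between `a` and `b` in every environment) never assigns
probability `0` or `1` to any consequence at any input. -/
theorem stmt13 {n : ℕ} (hn : 0 < n)
    (fM : (Fin n → Bool) → PMF Bool) (ε : ℝ) (hε : 0 ≤ ε)
    (hDP : IsDP (X := fun _ : Fin n => Bool) fM ε 0)
    (hResp : ∀ j : Fin n, ∃ (a b : Bool) (c : Bool), ∀ x : Fin n → Bool,
      (fM (Function.update x j a)) c ≠ (fM (Function.update x j b)) c) :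
    ∀ (x : Fin n → Bool) (c : Bool), 0 < (fM x) c ∧ (fM x) c < 1 := by
  intro x c
  obtain ⟨a, b, d, hd⟩ := hResp ⟨0, hn⟩
  have hc := mt (pmf_bool_ext c) (mt (DFunLike.congr_fun · d) (hd x))
  simp only [← PMF.toOuterMeasure_apply_singleton] at hc ⊢
  exact stmt13_general hDP hc x
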